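/- Let F, K be positive integers and 0 ≤ Z < F such that (Z + 1) divides K(F − Z). If s(F, K, Z) = K(F − Z)/(Z + 1), then for every positive integer ℓ, s(F, ℓK, Z) = ℓK(F − Z)/(Z + 1). -/

import Mathlib

open scoped Classical

/-- A placement delivery array with parameters `(F, K, Z)` over alphabet `S`:
an `F × K` array of cells that are either empty (`none`) or an element of `S`,
such that each column has exactly `Z` empty cells, no element occurs twice in a
row or in a column, and two equal entries in positions `(j₁,k₁)`, `(j₂,k₂)`
force the cells `(j₁,k₂)` and `(j₂,k₁)` to be empty. -/
def IsPDA {S : Type} (F K Z : ℕ) (A : Fin F → Fin K → Option S) : Prop :=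
  (∀ k : Fin K, (Finset.univ.filter fun j : Fin F => A j k = none).card = Z) ∧
  (∀ (j : Fin F) (k₁ k₂ : Fin K) (t : S), A j k₁ = some t → A j k₂ = some t → k₁ = k₂) ∧
  (∀ (j₁ j₂ : Fin F) (k : Fin K) (t : S), A j₁ k = some t → A j₂ k = some t → j₁ = j₂) ∧
  (∀ (j₁ j₂ : Fin F) (k₁ k₂ : Fin K) (t : S), j₁ ≠ j₂ → k₁ ≠ k₂ →
      A j₁ k₁ = some t → A j₂ k₂ = some t → A j₁ k₂ = none ∧ A j₂ k₁ = none)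

/-- `sPDA F K Z` is the minimum size of an alphabet `S` for which an `S`-PDA with
parameters `(F, K, Z)` exists. -/
noncomputable def sPDA (F K Z : ℕ) : ℕ :=
  sInf {n : ℕ | ∃ A : Fin F → Fin K → Option (Fin n), IsPDA F K Z A}

theorem pda_lower (F K Z n : ℕ) (A : Fin F → Fin K → Option (Fin n)) (h : IsPDA F K Z A) :
    K * (F - Z) ≤ (Z + 1) * n := by
  obtain ⟨h1, h2, h3, h4⟩ := h
  have hcol : ∀ k : Fin K, (Finset.univ.filter fun j : Fin F => A j k ≠ none).card = F - Z := by
    intro k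
    have := Finset.card_filter_add_card_filter_not (s := (Finset.univ : Finset (Fin F)))
      (fun j : Fin F => A j k = none)
    rw [h1 k, Finset.card_univ, Fintype.card_fin] at this
    have e : (Finset.univ.filter fun j : Fin F => A j k ≠ none).card
      = (Finset.univ.filter fun j : Fin F => ¬ A j k = none).card := rfl
    omega
  have hC : (Finset.univ.sigma
      (fun k : Fin K => Finset.univ.filter fun j : Fin F => A j k ≠ none)).card = K * (F - Z) := by
    rw [Finset.card_sigma]
    simp only [hcol]
    simp
  rw [← hC]
  have key := Finset.card_le_mul_card_image_of_maps_to
    (s := Finset.univ.sigma (fun k : Fin K => Finset.univ.filter fun j : Fin F => A j k ≠ none))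
    (f := fun p => A p.2 p.1) (t := (Finset.univ : Finset (Fin n)).image some) ?_ (Z + 1) ?_
  · refine key.trans (Nat.mul_le_mul_left _ ?_)
    refine Finset.card_image_le.trans ?_
    simp
  · rintro ⟨k, j⟩ hp
    simp only [Finset.mem_sigma, Finset.mem_univ, Finset.mem_filter, true_and] at hp
    obtain ⟨t, ht⟩ := Option.ne_none_iff_exists'.1 hp
    simp [ht]
  · intro b hb
    obtain ⟨t, -, rfl⟩ := Finset.mem_image.1 hb
    rcases Finset.eq_empty_or_nonempty (Finset.filter (fun p : (_ : Fin K) × Fin F => A p.2 p.1 = some t)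
      (Finset.univ.sigma (fun k : Fin K => Finset.univ.filter fun j : Fin F => A j k ≠ none)))
      with he | ⟨⟨k0, j0⟩, hp0⟩
    · rw [he]; simp
    · have h0 : A j0 k0 = some t := (Finset.mem_filter.1 hp0).2
      have hle : (insert j0 (Finset.univ.filter fun j : Fin F => A j k0 = none)).card ≤ Z + 1 := by
        refine (Finset.card_insert_le _ _).trans ?_
        rw [h1 k0]
      refine le_trans ?_ hle
      apply Finset.card_le_card_of_injOn (fun p => p.2)
      · rintro ⟨k, j⟩ hp
        have hp' : A j k = some t := (Finset.mem_filter.1 hp).2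
        by_cases hj : j = j0
        · simp [hj]
        · have hk : k ≠ k0 := by
            rintro rfl
            exact hj (h3 _ _ _ _ hp' h0)
          have := (h4 j j0 k k0 t hj hk hp' h0).1
          simp [this]
      · rintro ⟨k, j⟩ hp ⟨k', j'⟩ hp' hjj
        have a : A j k = some t := (Finset.mem_filter.1 hp).2
        have b : A j' k' = some t := (Finset.mem_filter.1 hp').2
        simp only at hjj
        subst hjj
        have := h2 _ _ _ _ a b
        subst this
        rfl

theorem pda_copies (F K Z n l : ℕ) (A : Fin F → Fin K → Option (Fin n)) (h : IsPDA F K Z A) :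
    ∃ B : Fin F → Fin (l * K) → Option (Fin (l * n)), IsPDA F (l * K) Z B := by
  obtain ⟨h1, h2, h3, h4⟩ := h
  let B : Fin F → Fin (l * K) → Option (Fin (l * n)) := fun j k =>
    (A j (finProdFinEquiv.symm k).2).map (fun t => finProdFinEquiv ((finProdFinEquiv.symm k).1, t))
  have hn : ∀ j k, B j k = none ↔ A j (finProdFinEquiv.symm k).2 = none := by
    intro j k
    simp only [B, Option.map_eq_none_iff]
  have hsm : ∀ j k t, B j k = some t → A j (finProdFinEquiv.symm k).2 =
      some (finProdFinEquiv.symm t).2 ∧ (finProdFinEquiv.symm k).1 = (finProdFinEquiv.symm t).1 := by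
    intro j k t hb
    obtain ⟨u, hu, rfl⟩ := Option.map_eq_some_iff.1 hb
    rw [Equiv.symm_apply_apply]
    exact ⟨hu, rfl⟩
  refine ⟨B, ?_, ?_, ?_, ?_⟩
  · intro k
    simp only [hn]
    exact h1 _
  · intro j k₁ k₂ t a b
    obtain ⟨a1, a2⟩ := hsm _ _ _ a
    obtain ⟨b1, b2⟩ := hsm _ _ _ b
    exact finProdFinEquiv.symm.injective (Prod.ext (a2.trans b2.symm) (h2 _ _ _ _ a1 b1))
  · intro j₁ j₂ k t a b
    exact h3 _ _ _ _ (hsm _ _ _ a).1 (hsm _ _ _ b).1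
  · intro j₁ j₂ k₁ k₂ t hj hk a b
    obtain ⟨a1, a2⟩ := hsm _ _ _ a
    obtain ⟨b1, b2⟩ := hsm _ _ _ b
    rw [hn, hn]
    refine h4 _ _ _ _ _ hj ?_ a1 b1
    intro he
    exact hk (finProdFinEquiv.symm.injective (Prod.ext (a2.trans b2.symm) he))

theorem stmt_9 (F K Z : ℕ) (hF : 0 < F) (hK : 0 < K) (hZ : Z < F)
    (hdvd : (Z + 1) ∣ K * (F - Z))
    (hs : sPDA F K Z = K * (F - Z) / (Z + 1)) :
    ∀ ℓ : ℕ, 1 ≤ ℓ → sPDA F (ℓ * K) Z = ℓ * K * (F - Z) / (Z + 1) := by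
  intro l hl
  obtain ⟨m, hm⟩ := hdvd
  have hz : 0 < Z + 1 := Nat.succ_pos _
  rw [hm, Nat.mul_div_cancel_left _ hz] at hs
  have hpos : 0 < m := by
    have h : 0 < K * (F - Z) := Nat.mul_pos hK (by omega)
    rw [hm] at h
    exact Nat.pos_of_mul_pos_left h
  have hne : {n : ℕ | ∃ A : Fin F → Fin K → Option (Fin n), IsPDA F K Z A}.Nonempty := by
    apply Nat.nonempty_of_pos_sInf
    unfold sPDA at hs
    omega
  have hmem := Nat.sInf_mem hne
  change sPDA F K Z ∈ _ at hmem
  rw [hs] at hmem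
  obtain ⟨A, hA⟩ := hmem
  have e : l * K * (F - Z) / (Z + 1) = l * m := by
    rw [mul_assoc, hm, mul_left_comm, Nat.mul_div_cancel_left _ hz]
  rw [e]
  have hB := pda_copies F K Z m l A hA
  apply le_antisymm
  · exact Nat.sInf_le hB
  · refine le_csInf ⟨_, hB⟩ ?_
    rintro n ⟨C, hC⟩
    have := pda_lower _ _ _ _ C hC
    rw [mul_assoc, hm, mul_left_comm] at this
    exact Nat.le_of_mul_le_mul_left this hz
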